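/- Let $P$ be a nonempty finite family of pairs $(\ell, y)$ where $\ell = (p_1, \dots, p_{k_\ell})$ is a nonempty finite list of real numbers in $(0,1)$ and $y \in \{0,1\}$. Define the likelihood loss $L^{mle} = -\frac{1}{|P|} \sum_{(\ell,y) \in P} \left[ y \sum_{t=1}^{k_\ell} \log p_t + (1-y) \log\left(1 - \prod_{t=1}^{k_\ell} p_t\right) \right]$ and the surrogate loss $L^{sur} = -\frac{1}{|P|} \sum_{(\ell,y) \in P} \left[ y \sum_{t=1}^{k_\ell} \log p_t + (1-y) \sum_{t=1}^{k_\ell} \log(1 - p_t) \right]$. Then $L^{sur} \geq L^{mle}$. -/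

import Mathlib

lemma list_prod_map_le_one {ι R : Type*} [CommMonoidWithZero R] [PartialOrder R]
    [ZeroLEOneClass R] [PosMulMono R] {l : List ι} {f : ι → R} (hf₀ : ∀ i ∈ l, 0 ≤ f i)
    (hf₁ : ∀ i ∈ l, f i ≤ 1) : (l.map f).prod ≤ 1 := by
  simpa using List.prod_map_le_prod_map₀ f (fun _ ↦ 1) hf₀ hf₁

lemma list_prod_map_add_prod_map_le_one {ι R : Type*} [CommSemiring R] [PartialOrder R]
    [IsOrderedRing R] {l : List ι} (hl : l ≠ []) {f g : ι → R} (hf : ∀ i ∈ l, 0 ≤ f i)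
    (hg : ∀ i ∈ l, 0 ≤ g i) (hfg : ∀ i ∈ l, f i + g i ≤ 1) :
    (l.map f).prod + (l.map g).prod ≤ 1 := by
  have hf₁ : ∀ i ∈ l, f i ≤ 1 := fun i hi ↦
    (le_add_of_nonneg_right (hg i hi)).trans (hfg i hi)
  have hg₁ : ∀ i ∈ l, g i ≤ 1 := fun i hi ↦
    (le_add_of_nonneg_left (hf i hi)).trans (hfg i hi)
  obtain ⟨a, t, rfl⟩ := List.exists_cons_of_ne_nil hl
  rw [List.forall_mem_cons] at hf hg hfg hf₁ hg₁
  calc ((a :: t).map f).prod + ((a :: t).map g).prod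
      = f a * (t.map f).prod + g a * (t.map g).prod := by
        simp only [List.map_cons, List.prod_cons]
    _ ≤ f a + g a :=
        add_le_add (mul_le_of_le_one_right hf.1 (list_prod_map_le_one hf.2 hf₁.2))
          (mul_le_of_le_one_right hg.1 (list_prod_map_le_one hg.2 hg₁.2))
    _ ≤ 1 := hfg.1

-- `∏ pₜ` and `∏ (1 - pₜ)` are the probabilities that independent events of probability `pₜ` all
-- occur and that none occurs; for a nonempty list these outcomes exclude each other.
lemma sum_log_one_sub_le_log_one_sub_prod {l : List ℝ} (hl : l ≠ [])
    (h : ∀ p ∈ l, p ∈ Set.Ico (0 : ℝ) 1) :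
    (l.map fun p ↦ Real.log (1 - p)).sum ≤ Real.log (1 - l.prod) := by
  have h_pos : ∀ p ∈ l, 0 < 1 - p := fun p hp ↦ sub_pos.2 (h p hp).2
  have h_prod_pos : 0 < (l.map fun p ↦ 1 - p).prod :=
    List.prod_pos (List.forall_mem_map.2 h_pos)
  have h_prod_le : (l.map fun p ↦ 1 - p).prod ≤ 1 - l.prod := by
    have h_add := list_prod_map_add_prod_map_le_one hl (f := id) (g := fun p ↦ 1 - p)
      (fun p hp ↦ (h p hp).1) (fun p hp ↦ (h_pos p hp).le) fun p _ ↦ (add_sub_cancel p 1).le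
    rw [List.map_id] at h_add
    exact le_sub_iff_add_le'.2 h_add
  calc (l.map fun p ↦ Real.log (1 - p)).sum
      = Real.log (l.map fun p ↦ 1 - p).prod := by
        rw [Real.log_list_prod (List.forall_mem_map.2 fun p hp ↦ (h_pos p hp).ne'), List.map_map,
          Function.comp_def]
    _ ≤ Real.log (1 - l.prod) := Real.log_le_log h_prod_pos h_prod_le

theorem surrogate_loss_ge_likelihood_loss_general {ι : Type*} (P : Finset ι) (hP : P.Nonempty)
    (ℓ : ι → List ℝ) (y : ι → ℝ)
    (hℓne : ∀ i ∈ P, ℓ i ≠ [])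
    (hℓ : ∀ i ∈ P, ∀ p ∈ ℓ i, p ∈ Set.Ioo (0 : ℝ) 1)
    (hy : ∀ i ∈ P, y i ≤ 1) :
    -(1 / (P.card : ℝ)) * ∑ i ∈ P,
        (y i * ((ℓ i).map Real.log).sum
          + (1 - y i) * ((ℓ i).map (fun p => Real.log (1 - p))).sum)
    ≥
    -(1 / (P.card : ℝ)) * ∑ i ∈ P,
        (y i * ((ℓ i).map Real.log).sum
          + (1 - y i) * Real.log (1 - (ℓ i).prod)) := by
  have h_card : 0 < (P.card : ℝ) := Nat.cast_pos.2 hP.card_pos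
  refine mul_le_mul_of_nonpos_left (Finset.sum_le_sum fun i hi ↦ ?_)
    (neg_nonpos.2 (one_div_pos.2 h_card).le)
  have h_log : ((ℓ i).map fun p ↦ Real.log (1 - p)).sum ≤ Real.log (1 - (ℓ i).prod) :=
    sum_log_one_sub_le_log_one_sub_prod (hℓne i hi)
      fun p hp ↦ Set.Ioo_subset_Ico_self (hℓ i hi p hp)
  have h_weight : 0 ≤ 1 - y i := sub_nonneg.2 (hy i hi)
  gcongr

/-- Proposition 1: the surrogate loss `L^sur` is an upper bound on the
likelihood loss `L^mle`.

The feedback dataset `P` is modelled by a nonempty finite index set `P : Finset ι`,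
where for each `i ∈ P`, `ℓ i` is the nonempty list of estimated safety
probabilities (each in `(0,1)`) of the states in the segment, and `y i ∈ {0,1}`
is the evaluator's binary label. -/
theorem surrogate_loss_ge_likelihood_loss {ι : Type*} (P : Finset ι) (hP : P.Nonempty)
    (ℓ : ι → List ℝ) (y : ι → ℝ)
    (hℓne : ∀ i ∈ P, ℓ i ≠ [])
    (hℓ : ∀ i ∈ P, ∀ p ∈ ℓ i, p ∈ Set.Ioo (0 : ℝ) 1)
    (hy : ∀ i ∈ P, y i = 0 ∨ y i = 1) :
    -(1 / (P.card : ℝ)) * ∑ i ∈ P,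
        (y i * ((ℓ i).map Real.log).sum
          + (1 - y i) * ((ℓ i).map (fun p => Real.log (1 - p))).sum)
    ≥
    -(1 / (P.card : ℝ)) * ∑ i ∈ P,
        (y i * ((ℓ i).map Real.log).sum
          + (1 - y i) * Real.log (1 - (ℓ i).prod)) :=
  surrogate_loss_ge_likelihood_loss_general P hP ℓ y hℓne hℓ fun i hi ↦
    (hy i hi).elim (fun h ↦ h.trans_le zero_le_one) le_of_eq
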